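/- Let q and q' be nondegenerate quadratic forms over F (char ≠ 2) of the same even dimension such that i_w(q_M) = i_w(q'_M) for every field extension M/F. Then q and q' have the same signed discriminant. -/

import Mathlib

/-- The Witt index over `M` of the diagonal quadratic form with entries `w : Fin d → F`,
extended to a field extension `M/F`. -/
noncomputable def wittIndexDiag (F : Type) [Field F] (M : Type) [Field M] [Algebra F M]
    {d : ℕ} (w : Fin d → F) : ℕ :=
  sSup {r | ∃ W : Submodule M (Fin d → M),
    (∀ x ∈ W, ∑ i, algebraMap F M (w i) * x i ^ 2 = 0) ∧ Module.finrank M ↥W = r}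

/-!
Write `d` and `d'` for the signed discriminants. Over `K = F(√d)` the form `q` has square signed
discriminant. Such a form can be made hyperbolic by a tower of function fields of conics: a point
on the conic `⟨a, b, c⟩` splits it as `ℍ ⊥ ⟨-abc⟩`, so the dimension drops by two while the
signed discriminant is unchanged. The function field of a conic `y² = a z² + b` adjoins to `K(z)`
the square root of a polynomial no constant multiple of which is a square, so no nonsquare of `K`
becomes a square in it. At the top of the tower `q'` is hyperbolic as well, so `d'` is a square
there and hence already in `K`. Thus `d'` or `d d'` is a square in `F`. In the first case, the
same argument over `F` with the roles of `q` and `q'` exchanged shows that `d` is a square too.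
-/

universe u

open Module Polynomial QuadraticMap

theorem map_two_ne_zero {K R : Type*} [Field K] [Semiring R] [Nontrivial R] (f : K →+* R)
    (h2 : (2 : K) ≠ 0) : (2 : R) ≠ 0 := by
  simpa only [map_ofNat] using (map_ne_zero f).mpr h2

/-- Squareness of an element can be tested after applying `f`; for a field extension this says that
no nonsquare becomes a square. -/
def ReflectsSquares {R S : Type*} [Semiring R] [Semiring S] (f : R →+* S) : Prop :=
  ∀ x, IsSquare (f x) → IsSquare x

namespace ReflectsSquares

theorem id (R : Type*) [Semiring R] : ReflectsSquares (RingHom.id R) := fun _ hx => hx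

theorem comp {R S T : Type*} [Semiring R] [Semiring S] [Semiring T] {g : S →+* T} {f : R →+* S}
    (hg : ReflectsSquares g) (hf : ReflectsSquares f) : ReflectsSquares (g.comp f) :=
  fun x hx => hf x (hg (f x) hx)

theorem polynomial_C (R : Type*) [CommSemiring R] : ReflectsSquares (C : R →+* R[X]) :=
  fun x hx => by simpa using hx.map (evalRingHom (0 : R))

theorem algebraMap_fractionRing (R K : Type*) [CommRing R] [IsIntegrallyClosed R]
    [Field K] [Algebra R K] [IsFractionRing R K] : ReflectsSquares (algebraMap R K) := by
  rintro x ⟨y, hy⟩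
  obtain ⟨r, rfl⟩ := IsIntegrallyClosed.exists_algebraMap_eq_of_isIntegral_pow (x := y) two_pos
    (by rw [pow_two, ← hy]; exact isIntegral_algebraMap (R := R))
  exact ⟨r, IsFractionRing.injective R K (by rw [hy, map_mul])⟩

end ReflectsSquares

theorem not_isSquare_C_mul_X_sq_add_C {K : Type*} [Field K] (h2 : (2 : K) ≠ 0) {a b : K}
    (ha : a ≠ 0) (hb : b ≠ 0) : ¬ IsSquare (C a * X ^ 2 + C b) := by
  rintro ⟨p, hp⟩
  have factored : C a * X ^ 2 + C b = C a * (X ^ 2 - C (-b / a)) := by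
    rw [mul_sub, ← C_mul, mul_div_cancel₀ _ ha, C_neg, sub_neg_eq_add]
  have squarefree : Squarefree (X ^ 2 - C (-b / a)) :=
    (separable_X_pow_sub_C _ (mod_cast h2) (by simp [ha, hb])).squarefree
  have p_isUnit : IsUnit p := squarefree p <| by
    rw [← hp, factored, (isUnit_C.mpr ha.isUnit).mul_left_dvd]
  have := natDegree_eq_zero_of_isUnit (p_isUnit.mul p_isUnit)
  rw [← hp, factored, natDegree_C_mul ha, natDegree_X_pow_sub_C] at this
  exact two_ne_zero this

theorem isSquare_or_isSquare_mul_of_isSquare_algebraMap_quadraticAlgebra {R : Type*} [CommRing R]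
    [IsDomain R] (h2 : (2 : R) ≠ 0) {e x : R}
    (hx : IsSquare (algebraMap R (QuadraticAlgebra R e 0) x)) : IsSquare x ∨ IsSquare (x * e) := by
  obtain ⟨y, hy⟩ := hx
  have re_eq : x = y.re * y.re + e * y.im * y.im := by
    simpa using congrArg QuadraticAlgebra.re hy
  have im_eq : 2 * (y.re * y.im) = 0 := by
    have := congrArg QuadraticAlgebra.im hy
    simp only [QuadraticAlgebra.algebraMap_im, QuadraticAlgebra.im_mul] at this
    linear_combination -this
  rcases mul_eq_zero.mp ((mul_eq_zero.mp im_eq).resolve_left h2) with re_zero | im_zero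
  · exact .inr ⟨e * y.im, by rw [re_eq, re_zero]; ring⟩
  · exact .inl ⟨y.re, by rw [re_eq, im_zero]; ring⟩

theorem exists_field_adjoin_sqrt {K : Type u} [Field K] (h2 : (2 : K) ≠ 0) (e : K) :
    ∃ (L : Type u) (_ : Field L) (f : K →+* L),
      IsSquare (f e) ∧ ∀ x, IsSquare (f x) → IsSquare x ∨ IsSquare (x * e) := by
  by_cases he : IsSquare e
  · exact ⟨K, inferInstance, RingHom.id K, he, fun _ => .inl⟩
  · have : Fact (∀ r, r ^ 2 ≠ e + 0 * r) := ⟨fun r hr => he ⟨r, by simpa [pow_two] using hr.symm⟩⟩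
    refine ⟨QuadraticAlgebra K e 0, inferInstance, algebraMap _ _, ⟨.omega, ?_⟩, fun _ =>
      isSquare_or_isSquare_mul_of_isSquare_algebraMap_quadraticAlgebra h2⟩
    rw [QuadraticAlgebra.omega_mul_omega_eq_mk, QuadraticAlgebra.algebraMap_eq]

theorem exists_reflectsSquares_sq_eq_mul_sq_add {K : Type u} [Field K] (h2 : (2 : K) ≠ 0)
    {a b : K} (ha : a ≠ 0) (hb : b ≠ 0) :
    ∃ (L : Type u) (_ : Field L) (f : K →+* L), ReflectsSquares f ∧
      ∃ y z : L, y ^ 2 = f a * z ^ 2 + f b := by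
  let toRat : K[X] →+* RatFunc K := algebraMap K[X] (RatFunc K)
  have toRat_reflects : ReflectsSquares toRat := .algebraMap_fractionRing _ _
  have h2' : (2 : RatFunc K) ≠ 0 := map_two_ne_zero (toRat.comp C) h2
  obtain ⟨L, _, g, ⟨y, hy⟩, hg⟩ := exists_field_adjoin_sqrt h2' (toRat (C a * X ^ 2 + C b))
  refine ⟨L, inferInstance, g.comp (toRat.comp C), fun x hx => ?_, y, g (toRat X), ?_⟩
  · rcases hg (toRat (C x)) hx with h | h
    · exact (toRat_reflects.comp (.polynomial_C K)) x h
    · by_contra x_not_sq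
      have x_ne : x ≠ 0 := by rintro rfl; exact x_not_sq .zero
      refine not_isSquare_C_mul_X_sq_add_C h2 (mul_ne_zero x_ne ha) (mul_ne_zero x_ne hb) ?_
      rw [← map_mul] at h
      simpa only [C_mul, mul_add, mul_assoc] using toRat_reflects _ h
  · rw [pow_two, ← hy]
    simp

theorem exists_reflectsSquares_conic_point {K : Type u} [Field K] (h2 : (2 : K) ≠ 0)
    {a b c : K} (ha : a ≠ 0) (hb : b ≠ 0) (hc : c ≠ 0) :
    ∃ (L : Type u) (_ : Field L) (f : K →+* L), ReflectsSquares f ∧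
      ∃ y z : L, f a + f b * y ^ 2 + f c * z ^ 2 = 0 := by
  obtain ⟨L, _, f, hf, y, z, hyz⟩ := exists_reflectsSquares_sq_eq_mul_sq_add h2
    (div_ne_zero (neg_ne_zero.mpr hc) hb) (div_ne_zero (neg_ne_zero.mpr ha) hb)
  have hfb : f b ≠ 0 := (map_ne_zero f).mpr hb
  refine ⟨L, inferInstance, f, hf, y, z, ?_⟩
  rw [hyz, map_div₀, map_div₀, map_neg, map_neg]
  field_simp
  ring

section TotallyIsotropic

variable {K V V' : Type*} [Field K] [AddCommGroup V] [Module K V] [AddCommGroup V'] [Module K V']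

/-- The subspace `W` is totally isotropic: the form `Q` vanishes identically on it. -/
def IsTotallyIsotropic (Q : QuadraticForm K V) (W : Submodule K V) : Prop :=
  ∀ x ∈ W, Q x = 0

/-- `Q` has a Lagrangian, i.e. a totally isotropic subspace of half the dimension. For a
nondegenerate form in characteristic not two this says that `Q` is hyperbolic. -/
def HasLagrangian (Q : QuadraticForm K V) : Prop :=
  ∃ W : Submodule K V, IsTotallyIsotropic Q W ∧ 2 * finrank K W = finrank K V

variable {Q : QuadraticForm K V} {W : Submodule K V}

theorem IsTotallyIsotropic.mono {U : Submodule K V} (hW : IsTotallyIsotropic Q W) (hUW : U ≤ W) :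
    IsTotallyIsotropic Q U :=
  fun x hx => hW x (hUW hx)

theorem IsTotallyIsotropic.isOrtho (hW : IsTotallyIsotropic Q W) {x y : V} (hx : x ∈ W)
    (hy : y ∈ W) : Q.IsOrtho x y := by
  rw [isOrtho_def, hW _ (W.add_mem hx hy), hW x hx, hW y hy, add_zero]

theorem IsTotallyIsotropic.map {Q' : QuadraticForm K V'} {W' : Submodule K V'}
    (hW' : IsTotallyIsotropic Q' W') (f : Q' →qᵢ Q) :
    IsTotallyIsotropic Q (W'.map f.toLinearMap) := by
  rintro _ ⟨x, hx, rfl⟩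
  exact (f.map_app x).trans (hW' x hx)

theorem isTotallyIsotropic_span_singleton {v : V} (hv : Q v = 0) :
    IsTotallyIsotropic Q (K ∙ v) := by
  intro x hx
  obtain ⟨t, rfl⟩ := Submodule.mem_span_singleton.mp hx
  rw [QuadraticMap.map_smul, hv, smul_zero]

theorem IsTotallyIsotropic.sup_span_singleton (hW : IsTotallyIsotropic Q W) {v : V} (hv : Q v = 0)
    (hvW : ∀ x ∈ W, Q.IsOrtho x v) : IsTotallyIsotropic Q (W ⊔ K ∙ v) := by
  intro z hz
  obtain ⟨x, hx, y, hy, rfl⟩ := Submodule.mem_sup.mp hz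
  obtain ⟨t, rfl⟩ := Submodule.mem_span_singleton.mp hy
  have : polar Q x (t • v) = 0 := by
    rw [polar_smul_right, (hvW x hx).polar_eq_zero, smul_zero]
  rw [QuadraticMap.map_add Q, hW x hx, QuadraticMap.map_smul, hv, this]
  simp

theorem hasLagrangian_of_finrank_eq_two (hdim : finrank K V = 2) {v : V} (hv : Q v = 0)
    (hv0 : v ≠ 0) : HasLagrangian Q :=
  ⟨K ∙ v, isTotallyIsotropic_span_singleton hv, by rw [finrank_span_singleton hv0, hdim]⟩

theorem HasLagrangian.of_isometry [FiniteDimensional K V] {Q' : QuadraticForm K V'}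
    (hQ' : HasLagrangian Q') (f : Q' →qᵢ Q) (hf : Function.Injective f)
    (hdim : finrank K V = finrank K V' + 2) {v : V} (hv : Q v = 0) (hvf : v ∉ Set.range f)
    (hortho : ∀ x, Q.IsOrtho (f x) v) : HasLagrangian Q := by
  obtain ⟨W, hW, hWdim⟩ := hQ'
  refine ⟨W.map f.toLinearMap ⊔ K ∙ v, (hW.map f).sup_span_singleton hv ?_, ?_⟩
  · rintro _ ⟨x, -, rfl⟩
    exact hortho x
  · have hvW : v ∉ W.map f.toLinearMap := fun ⟨x, _, hx⟩ => hvf ⟨x, hx⟩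
    have finrank_map : finrank K (W.map f.toLinearMap) = finrank K W :=
      (Submodule.equivMapOfInjective f.toLinearMap hf W).finrank_eq.symm
    rw [Submodule.finrank_sup_span_singleton hvW, finrank_map]
    lia

end TotallyIsotropic

section Discriminant

theorem det_fromBlocks_zero_one_one_zero (n R : Type*) [Fintype n] [DecidableEq n] [CommRing R] :
    (Matrix.fromBlocks 0 1 1 0 : Matrix (n ⊕ n) (n ⊕ n) R).det = (-1) ^ Fintype.card n := by
  have mul_eq : (Matrix.fromBlocks 1 1 0 1 * Matrix.fromBlocks 0 1 1 0 : Matrix (n ⊕ n) (n ⊕ n) R)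
      = Matrix.fromBlocks 1 1 1 0 := by
    simp [Matrix.fromBlocks_multiply]
  simpa [Matrix.det_fromBlocks_one₁₁, Matrix.det_neg] using congrArg Matrix.det mul_eq

theorem det_fromBlocks_zero₁₁_transpose {n R : Type*} [Fintype n] [DecidableEq n] [CommRing R]
    (B D : Matrix n n R) :
    (Matrix.fromBlocks 0 B B.transpose D).det = (-1) ^ Fintype.card n * B.det ^ 2 := by
  have mul_eq : Matrix.fromBlocks B 0 D B.transpose * Matrix.fromBlocks 0 1 1 0 =
      Matrix.fromBlocks 0 B B.transpose D := by
    simp [Matrix.fromBlocks_multiply]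
  rw [← mul_eq, Matrix.det_mul, det_fromBlocks_zero_one_one_zero, Matrix.det_fromBlocks_zero₁₂,
    Matrix.det_transpose, pow_two, mul_comm]

theorem exists_basis_sum_inl_mem {K V : Type*} [Field K] [AddCommGroup V] [Module K V]
    [FiniteDimensional K V] {W : Submodule K V} {k : ℕ} (hW : finrank K W = k)
    (hV : finrank K V = 2 * k) :
    ∃ b : Basis (Fin k ⊕ Fin k) K V, ∀ i, b (.inl i) ∈ W := by
  obtain ⟨U, hWU⟩ := W.exists_isCompl
  have hU : finrank K U = k := by
    have := Submodule.finrank_add_eq_of_isCompl hWU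
    lia
  refine ⟨((finBasisOfFinrankEq K W hW).prod (finBasisOfFinrankEq K U hU)).map
    (Submodule.prodEquivOfIsCompl W U hWU), fun i => ?_⟩
  simp

theorem polar_weightedSumSquares {R ι : Type*} [CommRing R] [Fintype ι] (w x y : ι → R) :
    polar (weightedSumSquares R w) x y = 2 * ∑ i, w i * (x i * y i) := by
  simp only [polar, weightedSumSquares_apply, smul_eq_mul, Pi.add_apply, Finset.mul_sum,
    ← Finset.sum_sub_distrib]
  exact Finset.sum_congr rfl fun i _ => by ring

theorem isOrtho_weightedSumSquares {R ι : Type*} [CommRing R] [Fintype ι] {w x y : ι → R}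
    (h : ∑ i, w i * (x i * y i) = 0) : (weightedSumSquares R w).IsOrtho x y := by
  rw [isOrtho_def, ← sub_eq_zero, ← sub_sub]
  exact (polar_weightedSumSquares w x y).trans (by rw [h, mul_zero])

variable {K V ι κ : Type*} [Field K] [Invertible (2 : K)] [AddCommGroup V] [Module K V]
  [Fintype ι] [DecidableEq ι] [Fintype κ] [DecidableEq κ]

theorem discr_reindex (Q : QuadraticForm K V) (b : Basis κ K V) (e : κ ≃ ι) :
    Q.discr (b.reindex e) = Q.discr b := by
  have : Q.toMatrix (b.reindex e) = (Q.toMatrix b).submatrix e.symm e.symm := by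
    ext i j
    simp [QuadraticForm.toMatrix, LinearMap.toMatrix₂_apply]
  rw [QuadraticForm.discr, this, Matrix.det_submatrix_equiv_self, QuadraticForm.discr]

theorem discr_weightedSumSquares (w : ι → K) :
    QuadraticForm.discr (Pi.basisFun K ι) (weightedSumSquares K w) = ∏ i, w i := by
  have : QuadraticForm.toMatrix (Pi.basisFun K ι) (weightedSumSquares K w) = Matrix.diagonal w := by
    ext i j
    rw [QuadraticForm.toMatrix, LinearMap.toMatrix₂_apply, Matrix.diagonal_apply,
      Pi.basisFun_apply, Pi.basisFun_apply]
    split_ifs with hij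
    · simp [hij, associated_eq_self_apply, Pi.single_apply]
    · refine associated_isOrtho.mpr (isOrtho_weightedSumSquares ?_)
      simp [Pi.single_apply, Ne.symm hij]
  rw [QuadraticForm.discr, this, Matrix.det_diagonal]

theorem discr_eq_of_inl_mem {Q : QuadraticForm K V} {W : Submodule K V}
    (hW : IsTotallyIsotropic Q W) (b : Basis (κ ⊕ κ) K V) (hb : ∀ i, b (.inl i) ∈ W) :
    Q.discr b = (-1) ^ Fintype.card κ * (Q.toMatrix b).toBlocks₁₂.det ^ 2 := by
  have upper_left : (Q.toMatrix b).toBlocks₁₁ = 0 := by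
    ext i j
    simp only [QuadraticForm.toMatrix, Matrix.toBlocks₁₁, Matrix.of_apply,
      LinearMap.toMatrix₂_apply, Matrix.zero_apply]
    exact associated_isOrtho.mpr (hW.isOrtho (hb i) (hb j))
  have lower_left : (Q.toMatrix b).toBlocks₂₁ = (Q.toMatrix b).toBlocks₁₂.transpose := by
    ext i j
    exact (QuadraticForm.isSymm_toMatrix b Q).apply _ _
  rw [QuadraticForm.discr, ← det_fromBlocks_zero₁₁_transpose _ (Q.toMatrix b).toBlocks₂₂,
    ← upper_left, ← lower_left, Matrix.fromBlocks_toBlocks]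

theorem HasLagrangian.isSquare_discr {Q : QuadraticForm K V} (hQ : HasLagrangian Q)
    (b : Basis ι K V) : IsSquare ((-1) ^ (Fintype.card ι / 2) * Q.discr b) := by
  have := b.finiteDimensional_of_finite
  obtain ⟨W, hW, hdim⟩ := hQ
  obtain ⟨c, hc⟩ := exists_basis_sum_inl_mem rfl hdim.symm
  have card_eq : Fintype.card ι = 2 * finrank K W := by rw [hdim, finrank_eq_card_basis b]
  let e : Fin (finrank K W) ⊕ Fin (finrank K W) ≃ ι := Fintype.equivOfCardEq (by simp; lia)
  set P := LinearMap.toMatrix b (c.reindex e) LinearMap.id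
  have change_basis : Q.discr b = P.det ^ 2 * Q.discr c := by
    rw [← discr_reindex Q c e, pow_two, ← QuadraticForm.discr_comp]
    rfl
  refine ⟨P.det * (Q.toMatrix c).toBlocks₁₂.det, ?_⟩
  have sign : ((-1 : K) ^ finrank K W) * (-1) ^ finrank K W = 1 := by
    rw [← mul_pow]; simp
  rw [change_basis, discr_eq_of_inl_mem hW c hc, card_eq, Fintype.card_fin,
    Nat.mul_div_cancel_left _ two_pos]
  linear_combination P.det ^ 2 * (Q.toMatrix c).toBlocks₁₂.det ^ 2 * sign

end Discriminant

section SignedDiscriminant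

variable {R S : Type*} [CommRing R] [CommRing S] {n : ℕ}

/-- The signed discriminant of the diagonal form `⟨w 0, …, w (n - 1)⟩`, as an element of `R` rather
than as a square class. Since `n / 2` and `n * (n - 1) / 2` have the same parity, the sign is the
usual one. -/
def signedDiscr (w : Fin n → R) : R :=
  (-1) ^ (n / 2) * ∏ i, w i

theorem map_signedDiscr (f : R →+* S) (w : Fin n → R) :
    signedDiscr (f ∘ w) = f (signedDiscr w) := by
  simp [signedDiscr]

theorem signedDiscr_two_mul {m : ℕ} (w : Fin (2 * m) → R) :
    signedDiscr w = (-1) ^ (m * (2 * m - 1)) * ∏ i, w i := by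
  have same_parity : Even (m * (2 * m - 1)) ↔ Even m := by
    rcases m with - | m
    · simp
    · rw [Nat.even_mul, or_iff_left (by grind)]
  rw [signedDiscr, Nat.mul_div_cancel_left _ two_pos, neg_one_pow_congr same_parity]

theorem HasLagrangian.isSquare_signedDiscr {K : Type*} [Field K] (h2 : (2 : K) ≠ 0)
    {w : Fin n → K} (hw : HasLagrangian (weightedSumSquares K w)) : IsSquare (signedDiscr w) := by
  have := invertibleOfNonzero h2
  simpa only [signedDiscr, discr_weightedSumSquares, Fintype.card_fin] using
    hw.isSquare_discr (Pi.basisFun K (Fin n))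

end SignedDiscriminant

section HyperbolicComplement

theorem sum_univ_add_three {M : Type*} [AddCommMonoid M] {n : ℕ} (g : Fin (n + 3) → M) :
    ∑ i, g i = g 0 + (g 1 + (g 2 + ∑ i : Fin n, g i.succ.succ.succ)) := by
  rw [Fin.sum_univ_succ, Fin.sum_univ_succ, Fin.sum_univ_succ]
  rfl

variable {R S : Type*} [CommRing R] [CommRing S] {n : ℕ}

/-- The weights of the form `φ` with `⟨w 0, w 1, w 2, …⟩ ≅ ℍ ⊥ φ` whenever `⟨w 0, w 1, w 2⟩` is
isotropic: comparing discriminants, `⟨a, b, c⟩ ≅ ℍ ⊥ ⟨-abc⟩`. -/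
def hyperbolicComplement (w : Fin (n + 3) → R) : Fin (n + 1) → R :=
  Fin.cons (-(w 0 * w 1 * w 2)) fun i => w i.succ.succ.succ

theorem comp_hyperbolicComplement (f : R →+* S) (w : Fin (n + 3) → R) :
    f ∘ hyperbolicComplement w = hyperbolicComplement (f ∘ w) := by
  funext i
  cases i using Fin.cases <;> simp [hyperbolicComplement]

theorem signedDiscr_hyperbolicComplement (w : Fin (n + 3) → R) :
    signedDiscr (hyperbolicComplement w) = signedDiscr w := by
  have half : (n + 3) / 2 = (n + 1) / 2 + 1 := by lia
  simp only [signedDiscr, hyperbolicComplement, half, Fin.prod_univ_succ, Fin.cons_zero,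
    Fin.cons_succ, pow_succ, Fin.succ_zero_eq_one, Fin.succ_one_eq_two]
  ring

theorem hyperbolicComplement_ne_zero [IsDomain R] {w : Fin (n + 3) → R} (hw : ∀ i, w i ≠ 0)
    (i : Fin (n + 1)) : hyperbolicComplement w i ≠ 0 := by
  cases i using Fin.cases <;> simp [hyperbolicComplement, hw]

/-- For an isotropic vector `(1, y, z)` of `⟨w 0, w 1, w 2⟩`, the isometric embedding of the
hyperbolic complement into its orthogonal complement. It sends the first basis vector to
`(0, -w 2 * z, w 1 * y, 0, …)`, which is orthogonal to `(1, y, z, 0, …)` and has the value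
`w 1 * w 2 * (w 1 * y ^ 2 + w 2 * z ^ 2) = -(w 0 * w 1 * w 2)`. -/
def hyperbolicComplementEmbedding (w : Fin (n + 3) → R) {y z : R}
    (h : w 0 + w 1 * y ^ 2 + w 2 * z ^ 2 = 0) :
    weightedSumSquares R (hyperbolicComplement w) →qᵢ weightedSumSquares R w where
  toLinearMap := .vecCons 0 <| .vecCons (-(w 2 * z) • .proj 0) <|
    .vecCons ((w 1 * y) • .proj 0) (.funLeft R R Fin.succ)
  map_app' u := by
    simp only [AddHom.toFun_eq_coe, LinearMap.coe_toAddHom, LinearMap.vecCons_apply,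
      LinearMap.zero_apply, LinearMap.smul_apply, LinearMap.coe_proj, Function.eval, smul_eq_mul,
      weightedSumSquares_apply, sum_univ_add_three, Matrix.cons_val_zero, Matrix.cons_val_one,
      Matrix.cons_val, Matrix.cons_val_succ, LinearMap.funLeft_apply, hyperbolicComplement,
      Fin.sum_univ_succ, Fin.cons_zero, Fin.cons_succ]
    linear_combination w 1 * w 2 * u 0 ^ 2 * h

theorem hyperbolicComplementEmbedding_apply (w : Fin (n + 3) → R) {y z : R}
    (h : w 0 + w 1 * y ^ 2 + w 2 * z ^ 2 = 0) (u : Fin (n + 1) → R) :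
    hyperbolicComplementEmbedding w h u = Matrix.vecCons 0 (Matrix.vecCons (-(w 2 * z) * u 0)
      (Matrix.vecCons (w 1 * y * u 0) fun i => u i.succ)) :=
  rfl

theorem hyperbolicComplementEmbedding_injective [IsDomain R] {w : Fin (n + 3) → R} (hw : w 0 ≠ 0)
    {y z : R} (h : w 0 + w 1 * y ^ 2 + w 2 * z ^ 2 = 0) :
    Function.Injective (hyperbolicComplementEmbedding w h) := by
  refine (injective_iff_map_eq_zero _).mpr fun u hu => ?_
  rw [hyperbolicComplementEmbedding_apply] at hu
  have u_zero : u 0 = 0 := by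
    have coord_one : -(w 2 * z) * u 0 = 0 := congrFun hu 1
    have coord_two : w 1 * y * u 0 = 0 := congrFun hu 2
    refine (mul_eq_zero.mp ?_).resolve_left hw
    linear_combination u 0 * h + z * coord_one - y * coord_two
  have u_succ (i : Fin n) : u i.succ = 0 := congrFun hu i.succ.succ.succ
  exact funext (Fin.cases u_zero u_succ)

theorem hasLagrangian_of_hyperbolicComplement {K : Type*} [Field K] {w : Fin (n + 3) → K}
    (hw : w 0 ≠ 0) {y z : K} (h : w 0 + w 1 * y ^ 2 + w 2 * z ^ 2 = 0)
    (hQ : HasLagrangian (weightedSumSquares K (hyperbolicComplement w))) :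
    HasLagrangian (weightedSumSquares K w) := by
  let v : Fin (n + 3) → K := Matrix.vecCons 1 (Matrix.vecCons y (Matrix.vecCons z 0))
  refine hQ.of_isometry (hyperbolicComplementEmbedding w h)
    (hyperbolicComplementEmbedding_injective hw h) (by simp) (v := v) ?_ ?_ fun u => ?_
  · simp only [weightedSumSquares_apply, sum_univ_add_three, v, smul_eq_mul, Matrix.cons_val_zero,
      Matrix.cons_val_one, Matrix.cons_val, Matrix.cons_val_succ, Pi.zero_apply, mul_zero,
      Finset.sum_const_zero]
    linear_combination h
  · rintro ⟨u, hu⟩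
    exact zero_ne_one (congrFun hu 0)
  · refine isOrtho_weightedSumSquares ?_
    simp only [hyperbolicComplementEmbedding_apply, sum_univ_add_three, v, Matrix.cons_val_zero,
      Matrix.cons_val_one, Matrix.cons_val, Matrix.cons_val_succ, Pi.zero_apply, mul_zero,
      Finset.sum_const_zero]
    ring

end HyperbolicComplement

section SplittingFields

theorem hasLagrangian_binary_of_isSquare_signedDiscr {K : Type*} [Field K] {w : Fin 2 → K}
    (hw : w 0 ≠ 0) (hd : IsSquare (signedDiscr w)) : HasLagrangian (weightedSumSquares K w) := by
  obtain ⟨r, hr⟩ := hd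
  simp only [signedDiscr, Nat.div_self two_pos, pow_one, Fin.prod_univ_two] at hr
  refine hasLagrangian_of_finrank_eq_two (by simp) (v := ![r, w 0]) ?_ fun hv => hw (congrFun hv 1)
  simp only [weightedSumSquares_apply, smul_eq_mul, Fin.sum_univ_two, Matrix.cons_val_zero,
    Matrix.cons_val_one]
  linear_combination -(w 0) * hr

theorem exists_reflectsSquares_hasLagrangian {n : ℕ} (hn : Even n) {K : Type u} [Field K]
    (h2 : (2 : K) ≠ 0) {w : Fin n → K} (hw : ∀ i, w i ≠ 0) (hd : IsSquare (signedDiscr w)) :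
    ∃ (L : Type u) (_ : Field L) (f : K →+* L),
      ReflectsSquares f ∧ HasLagrangian (weightedSumSquares L (f ∘ w)) := by
  match n with
  | 0 =>
    exact ⟨K, inferInstance, .id K, .id K, ⊥, by simp [IsTotallyIsotropic], by simp⟩
  | 1 => exact absurd hn Nat.not_even_one
  | 2 =>
    exact ⟨K, inferInstance, .id K, .id K, hasLagrangian_binary_of_isSquare_signedDiscr (hw 0) hd⟩
  | n + 3 =>
    obtain ⟨L, _, f, hf, y, z, hyz⟩ := exists_reflectsSquares_conic_point h2 (hw 0) (hw 1) (hw 2)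
    have hfw (i) : (f ∘ w) i ≠ 0 := (map_ne_zero f).mpr (hw i)
    obtain ⟨M, _, g, hg, hM⟩ := exists_reflectsSquares_hasLagrangian (n := n + 1) (by grind)
      (map_two_ne_zero f h2) (hyperbolicComplement_ne_zero hfw)
      (by rw [signedDiscr_hyperbolicComplement, map_signedDiscr]; exact hd.map f)
    rw [comp_hyperbolicComplement] at hM
    refine ⟨M, inferInstance, g.comp f, hg.comp hf, hasLagrangian_of_hyperbolicComplement
      ((map_ne_zero g).mpr (hfw 0)) (y := g y) (z := g z) ?_ hM⟩
    simpa using congrArg g hyz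

theorem isSquare_signedDiscr_of_forall_hasLagrangian_imp {K : Type u} [Field K] {n : ℕ}
    (hn : Even n) (h2 : (2 : K) ≠ 0) {w w' : Fin n → K} (hw : ∀ i, w i ≠ 0)
    (h : ∀ (L : Type u) [Field L] (f : K →+* L),
      HasLagrangian (weightedSumSquares L (f ∘ w)) → HasLagrangian (weightedSumSquares L (f ∘ w')))
    (hd : IsSquare (signedDiscr w)) : IsSquare (signedDiscr w') := by
  obtain ⟨L, _, f, hf, hL⟩ := exists_reflectsSquares_hasLagrangian hn h2 hw hd
  refine hf _ ?_
  rw [← map_signedDiscr]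
  exact (h L f hL).isSquare_signedDiscr (map_two_ne_zero f h2)

end SplittingFields

section WittIndex

theorem exists_submodule_le_finrank_eq {K V : Type*} [Field K] [AddCommGroup V] [Module K V]
    {W : Submodule K V} {k : ℕ} (hk : k ≤ finrank K W) : ∃ U ≤ W, finrank K U = k := by
  obtain ⟨b, hb⟩ := exists_linearIndependent_of_le_finrank hk
  refine ⟨Submodule.span K (Set.range (W.subtype ∘ b)), ?_, ?_⟩
  · rw [Submodule.span_le, Set.range_subset_iff]
    exact fun i => (b i).2
  · rw [finrank_span_eq_card (hb.map' _ W.ker_subtype), Fintype.card_fin]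

variable {F M : Type} [Field F] [Field M] [Algebra F M]

theorem wittIndexDiag_eq_sSup {n : ℕ} (w : Fin n → F) :
    wittIndexDiag F M w = sSup {r | ∃ W : Submodule M (Fin n → M),
      IsTotallyIsotropic (weightedSumSquares M (algebraMap F M ∘ w)) W ∧ finrank M W = r} := by
  simp only [wittIndexDiag, IsTotallyIsotropic, weightedSumSquares_apply, smul_eq_mul,
    Function.comp_apply, pow_two]

theorem le_wittIndexDiag_iff {n k : ℕ} (w : Fin n → F) :
    k ≤ wittIndexDiag F M w ↔ ∃ W : Submodule M (Fin n → M),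
      IsTotallyIsotropic (weightedSumSquares M (algebraMap F M ∘ w)) W ∧ finrank M W = k := by
  rw [wittIndexDiag_eq_sSup]
  set dims := {r | ∃ W : Submodule M (Fin n → M),
    IsTotallyIsotropic (weightedSumSquares M (algebraMap F M ∘ w)) W ∧ finrank M W = r}
  have dims_nonempty : dims.Nonempty := ⟨0, ⊥, by simp [IsTotallyIsotropic], finrank_bot M _⟩
  have dims_bddAbove : BddAbove dims := by
    refine ⟨finrank M (Fin n → M), ?_⟩
    rintro _ ⟨W, -, rfl⟩
    exact W.finrank_le
  refine ⟨fun hk => ?_, le_csSup dims_bddAbove⟩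
  obtain ⟨W, hW, hWdim⟩ := Nat.sSup_mem dims_nonempty dims_bddAbove
  obtain ⟨U, hUW, hU⟩ := exists_submodule_le_finrank_eq (hk.trans_eq hWdim.symm)
  exact ⟨U, hW.mono hUW, hU⟩

theorem hasLagrangian_iff_le_wittIndexDiag {m : ℕ} (w : Fin (2 * m) → F) :
    HasLagrangian (weightedSumSquares M (algebraMap F M ∘ w)) ↔ m ≤ wittIndexDiag F M w := by
  simp only [HasLagrangian, le_wittIndexDiag_iff, finrank_fin_fun, mul_right_inj' two_ne_zero]

end WittIndex

theorem same_wittIndices_implies_same_discriminant_general {F : Type u} [Field F]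
    (h2 : (2 : F) ≠ 0) {n : ℕ} (hn : Even n) {w w' : Fin n → F}
    (hw : ∀ i, w i ≠ 0) (hw' : ∀ i, w' i ≠ 0)
    (h : ∀ (M : Type u) [Field M] (f : F →+* M),
      HasLagrangian (weightedSumSquares M (f ∘ w)) ↔
        HasLagrangian (weightedSumSquares M (f ∘ w'))) :
    IsSquare (signedDiscr w * signedDiscr w') := by
  obtain ⟨K, _, g, hg, hgF⟩ := exists_field_adjoin_sqrt h2 (signedDiscr w)
  have square_over_K : IsSquare (g (signedDiscr w')) := by
    rw [← map_signedDiscr] at hg ⊢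
    exact isSquare_signedDiscr_of_forall_hasLagrangian_imp hn (map_two_ne_zero g h2)
      (fun i => (map_ne_zero g).mpr (hw i)) (fun L _ f => (h L (f.comp g)).mp) hg
  rcases hgF _ square_over_K with hd' | hdd'
  · have hd : IsSquare (signedDiscr w) := isSquare_signedDiscr_of_forall_hasLagrangian_imp hn h2 hw'
      (fun L _ f => (h L f).mpr) hd'
    exact hd.mul hd'
  · rwa [mul_comm]

/-- Let `q = ⟨w⟩` and `q' = ⟨w'⟩` be nondegenerate quadratic forms over `F` (char `≠ 2`)
of the same even dimension `2m`, such that `i_w(q_M) = i_w(q'_M)` for every field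
extension `M/F`.  Then `q` and `q'` have the same signed discriminant, i.e. the product
of their signed discriminants is a square. -/
theorem same_wittIndices_implies_same_discriminant
    (F : Type) [Field F] (h2 : (2 : F) ≠ 0)
    (m : ℕ) (hm : 0 < m) (w w' : Fin (2 * m) → F)
    (hw : ∀ i, w i ≠ 0) (hw' : ∀ i, w' i ≠ 0)
    (hW : ∀ (M : Type) [Field M] [Algebra F M], wittIndexDiag F M w = wittIndexDiag F M w') :
    IsSquare (((-1 : F) ^ (m * (2 * m - 1)) * ∏ i, w i) *
      ((-1 : F) ^ (m * (2 * m - 1)) * ∏ i, w' i)) := by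
  simpa only [signedDiscr_two_mul] using same_wittIndices_implies_same_discriminant_general h2
    (even_two_mul m) hw hw' fun M _ f => by
      let := f.toAlgebra
      exact (hasLagrangian_iff_le_wittIndexDiag w).trans
        ((hW M) ▸ (hasLagrangian_iff_le_wittIndexDiag w').symm)
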